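/- Let 0 < α < 1, let A be a real s×s matrix, and let t₀ > 0. Then for every T > 2t₀ and every t > T one has t^{1-α} ∫_{t-t₀}^{t} (t-τ)^{α-1} ‖E_{α,α}((t-τ)^α A)‖ τ^{α-1} dτ ≤ 2^{1-α} t₀^α E_{α,α+1}(t₀^α ‖A‖), where E_{α,α+1} on the right-hand side is the scalar Mittag-Leffler function evaluated at the real number t₀^α ‖A‖. -/

import Mathlib

open Filter Topology MeasureTheory

attribute [local instance] Matrix.linftyOpNormedAddCommGroup Matrix.linftyOpNormedRing

/-- The matrix Mittag-Leffler function `E_{α,β}(B) = ∑ Bᵏ / Γ(αk + β)`. -/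
noncomputable def ML {s : ℕ} (α β : ℝ) (B : Matrix (Fin s) (Fin s) ℝ) :
    Matrix (Fin s) (Fin s) ℝ :=
  ∑' k : ℕ, (Real.Gamma (α * k + β))⁻¹ • B ^ k

/-- The scalar Mittag-Leffler function `E_{α,β}(z) = ∑ zᵏ / Γ(αk + β)`. -/
noncomputable def mlScalar (α β z : ℝ) : ℝ :=
  ∑' k : ℕ, z ^ k / Real.Gamma (α * k + β)

/-!
On `[t - t₀, t]` with `t ≥ 2t₀` we have `t / τ ≤ 2`, so the weight `t^{1-α} τ^{α-1} = (t / τ)^{1-α}`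
is at most `2^{1-α}`, and what remains is `∫₀^{t₀} u^{α-1} ‖E_{α,α}(u^α A)‖ du`. Bounding the norm
of the series by the series of norms and integrating term by term gives
`∫₀ˣ u^{β-1} E_{α,β}(u^α c) du = x^β E_{α,β+1}(x^α c)`. The weights `(t - τ)^{α-1}` and `τ^{α-1}`
play independent roles, so their exponents can be decoupled from `α`.
-/

section Scalar

variable {α β : ℝ}

-- The slope of the convex function `log ∘ Γ` over `[x, x + 1]` is `log x`.
lemma rpow_mul_Gamma_add_one_le {x a : ℝ} (hx : 0 < x) (ha : 0 < a) :
    x ^ a * Real.Gamma (x + 1) ≤ Real.Gamma (x + 1 + a) := by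
  have hΓx : 0 < Real.Gamma x := Real.Gamma_pos_of_pos hx
  have hΓx1 : 0 < Real.Gamma (x + 1) := Real.Gamma_pos_of_pos (by positivity)
  have hΓxa : 0 < Real.Gamma (x + 1 + a) := Real.Gamma_pos_of_pos (by positivity)
  have hslope := Real.convexOn_log_Gamma.slope_mono_adjacent (x := x) (y := x + 1)
    (z := x + 1 + a) hx (Set.mem_Ioi.2 (by positivity)) (by linarith) (by linarith)
  have hlog : Real.log (Real.Gamma (x + 1)) - Real.log (Real.Gamma x) = Real.log x := by
    rw [Real.Gamma_add_one hx.ne', Real.log_mul hx.ne' hΓx.ne', add_sub_cancel_right]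
  rw [Function.comp_apply, Function.comp_apply, Function.comp_apply, hlog, add_sub_cancel_left,
    add_sub_cancel_left, div_one, le_div_iff₀ ha] at hslope
  rw [← Real.log_le_log_iff (by positivity) hΓxa,
    Real.log_mul (by positivity) hΓx1.ne', Real.log_rpow hx]
  linarith

lemma Gamma_mul_natCast_add_pos (hα : 0 < α) (hβ : 0 < β) (k : ℕ) :
    0 < Real.Gamma (α * k + β) :=
  Real.Gamma_pos_of_pos (by positivity)

lemma eventually_mul_Gamma_le_Gamma_succ (hα : 0 < α) (β C : ℝ) :
    ∀ᶠ k : ℕ in atTop,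
      C * Real.Gamma (α * k + β) ≤ Real.Gamma (α * (k + 1 : ℕ) + β) := by
  have hlin : Tendsto (fun k : ℕ => α * (k : ℝ) + (β - 1)) atTop atTop :=
    tendsto_atTop_add_const_right _ _ (tendsto_natCast_atTop_atTop.const_mul_atTop hα)
  filter_upwards [hlin.eventually_gt_atTop 0,
    ((tendsto_rpow_atTop hα).comp hlin).eventually_ge_atTop C] with k hpos hC
  have hΓ := rpow_mul_Gamma_add_one_le hpos hα
  rw [show α * (k : ℝ) + (β - 1) + 1 = α * k + β by ring] at hΓ
  calc C * Real.Gamma (α * k + β)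
      ≤ (α * k + (β - 1)) ^ α * Real.Gamma (α * k + β) := by
        gcongr
        · exact (Real.Gamma_pos_of_pos (by linarith)).le
        · exact hC
    _ ≤ Real.Gamma (α * k + β + α) := hΓ
    _ = Real.Gamma (α * (k + 1 : ℕ) + β) := by push_cast; ring_nf

lemma summable_pow_div_Gamma (hα : 0 < α) (hβ : 0 < β) (z : ℝ) :
    Summable fun k : ℕ => z ^ k / Real.Gamma (α * k + β) := by
  refine summable_of_ratio_norm_eventually_le (r := 1 / 2) (by norm_num) ?_
  filter_upwards [eventually_mul_Gamma_le_Gamma_succ hα β (2 * |z|)] with k hk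
  have hΓ := Gamma_mul_natCast_add_pos hα hβ k
  have hΓ' := Gamma_mul_natCast_add_pos hα hβ (k + 1)
  simp only [norm_div, norm_pow, Real.norm_eq_abs, abs_of_pos hΓ, abs_of_pos hΓ']
  rw [← mul_div_assoc, div_le_div_iff₀ hΓ' hΓ]
  calc |z| ^ (k + 1) * Real.Gamma (α * k + β)
      = 1 / 2 * |z| ^ k * (2 * |z| * Real.Gamma (α * k + β)) := by ring
    _ ≤ 1 / 2 * |z| ^ k * Real.Gamma (α * (k + 1 : ℕ) + β) := by gcongr

end Scalar

section NormedAlgebra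

/-- The Mittag-Leffler function `E_{α,β}(x) = ∑ xᵏ / Γ(αk + β)` on a topological real algebra, of
which `ML` and `mlScalar` are the cases of real matrices and of `ℝ`. -/
noncomputable def mittagLeffler {𝔸 : Type*} [Ring 𝔸] [Algebra ℝ 𝔸] [TopologicalSpace 𝔸]
    (α β : ℝ) (x : 𝔸) : 𝔸 :=
  ∑' k : ℕ, (Real.Gamma (α * k + β))⁻¹ • x ^ k

lemma mittagLeffler_eq_mlScalar (α β z : ℝ) : mittagLeffler α β z = mlScalar α β z :=
  tsum_congr fun _ => (div_eq_inv_mul _ _).symm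

lemma norm_pow_le_max_mul_pow {R : Type*} [SeminormedRing R] (x : R) (k : ℕ) :
    ‖x ^ k‖ ≤ max ‖(1 : R)‖ 1 * ‖x‖ ^ k := by
  rcases k.eq_zero_or_pos with rfl | hk
  · simp
  · exact (norm_pow_le' x hk).trans (le_mul_of_one_le_left (by positivity) (le_max_right _ _))

variable {𝔸 : Type*} [NormedRing 𝔸] [NormedAlgebra ℝ 𝔸] {α β : ℝ}

lemma norm_inv_Gamma_smul_pow_le (hα : 0 < α) (hβ : 0 < β) (x : 𝔸) (k : ℕ) :
    ‖(Real.Gamma (α * k + β))⁻¹ • x ^ k‖ ≤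
      max ‖(1 : 𝔸)‖ 1 * (‖x‖ ^ k / Real.Gamma (α * k + β)) := by
  have := Gamma_mul_natCast_add_pos hα hβ k
  rw [norm_smul, Real.norm_of_nonneg (by positivity), ← mul_div_assoc, div_eq_inv_mul]
  gcongr
  exact norm_pow_le_max_mul_pow x k

lemma norm_mittagLeffler_le (hα : 0 < α) (hβ : 0 < β) (x : 𝔸) :
    ‖mittagLeffler α β x‖ ≤ max ‖(1 : 𝔸)‖ 1 * mlScalar α β ‖x‖ :=
  tsum_of_norm_bounded ((summable_pow_div_Gamma hα hβ ‖x‖).hasSum.mul_left _)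
    (norm_inv_Gamma_smul_pow_le hα hβ x)

lemma continuous_mittagLeffler [CompleteSpace 𝔸] (hα : 0 < α) (hβ : 0 < β) :
    Continuous (mittagLeffler α β : 𝔸 → 𝔸) := by
  refine continuous_iff_continuousAt.2 fun x => ?_
  have hball : ContinuousOn (mittagLeffler α β) (Metric.ball (0 : 𝔸) (‖x‖ + 1)) := by
    refine continuousOn_tsum (fun k => by fun_prop)
      ((summable_pow_div_Gamma hα hβ (‖x‖ + 1)).mul_left (max ‖(1 : 𝔸)‖ 1)) fun k y hy => ?_
    have := Gamma_mul_natCast_add_pos hα hβ k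
    have hy' : ‖y‖ ≤ ‖x‖ + 1 := (mem_ball_zero_iff.1 hy).le
    exact (norm_inv_Gamma_smul_pow_le hα hβ y k).trans (by gcongr)
  exact hball.continuousAt (Metric.isOpen_ball.mem_nhds (by simp))

lemma continuous_mlScalar (hα : 0 < α) (hβ : 0 < β) : Continuous (mlScalar α β) := by
  rw [← funext (mittagLeffler_eq_mlScalar α β)]
  exact continuous_mittagLeffler hα hβ

end NormedAlgebra

section Integral

variable {α β : ℝ}

lemma intervalIntegrable_rpow_mul {f : ℝ → ℝ} (hβ : 0 < β) (hf : Continuous f) (a b : ℝ) :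
    IntervalIntegrable (fun u => u ^ (β - 1) * f u) volume a b :=
  (intervalIntegral.intervalIntegrable_rpow' (by linarith)).mul_continuousOn hf.continuousOn

lemma continuous_mlScalar_rpow_mul (hα : 0 < α) (hβ : 0 < β) (c : ℝ) :
    Continuous fun u : ℝ => mlScalar α β (u ^ α * c) :=
  (continuous_mlScalar hα hβ).comp ((Real.continuous_rpow_const hα.le).mul_const c)

lemma integral_rpow_mul_pow_div_Gamma (hα : 0 < α) (hβ : 0 < β) {x : ℝ} (hx : 0 ≤ x) (c : ℝ)
    (k : ℕ) :
    ∫ u in 0..x, u ^ (β - 1) * ((u ^ α * c) ^ k / Real.Gamma (α * k + β)) =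
      x ^ β * ((x ^ α * c) ^ k / Real.Gamma (α * k + (β + 1))) := by
  have hk : 0 < α * k + β := by positivity
  have := Gamma_mul_natCast_add_pos hα hβ k
  have hterm : ∀ u ∈ Set.uIoc 0 x, u ^ (β - 1) * ((u ^ α * c) ^ k / Real.Gamma (α * k + β)) =
      u ^ (α * k + β - 1) * (c ^ k / Real.Gamma (α * k + β)) := by
    intro u hu
    have hu0 : 0 < u := (Set.uIoc_of_le hx ▸ hu).1
    rw [add_sub_assoc, Real.rpow_add hu0, Real.rpow_mul hu0.le, Real.rpow_natCast, mul_pow]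
    ring
  rw [intervalIntegral.integral_congr_ae (.of_forall hterm), intervalIntegral.integral_mul_const,
    integral_rpow (Or.inl (by linarith)), sub_add_cancel, Real.zero_rpow hk.ne', ← add_assoc,
    Real.Gamma_add_one hk.ne', Real.rpow_add_of_nonneg hx (by positivity) hβ.le, Real.rpow_mul hx,
    Real.rpow_natCast, mul_pow]
  field_simp
  ring

lemma integral_rpow_mul_mlScalar (hα : 0 < α) (hβ : 0 < β) {x : ℝ} (hx : 0 ≤ x) (c : ℝ) :
    ∫ u in 0..x, u ^ (β - 1) * mlScalar α β (u ^ α * c) =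
      x ^ β * mlScalar α (β + 1) (x ^ α * c) := by
  have hsum (d u : ℝ) : HasSum (fun k : ℕ => u ^ (β - 1) * ((u ^ α * d) ^ k /
      Real.Gamma (α * k + β))) (u ^ (β - 1) * mlScalar α β (u ^ α * d)) :=
    (summable_pow_div_Gamma hα hβ (u ^ α * d)).hasSum.mul_left _
  have hswap : HasSum
      (fun k : ℕ => ∫ u in 0..x, u ^ (β - 1) * ((u ^ α * c) ^ k / Real.Gamma (α * k + β)))
      (∫ u in 0..x, u ^ (β - 1) * mlScalar α β (u ^ α * c)) := by
    refine intervalIntegral.hasSum_integral_of_dominated_convergence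
      (fun k u => u ^ (β - 1) * ((u ^ α * |c|) ^ k / Real.Gamma (α * k + β)))
      (fun k => by fun_prop) (fun k => .of_forall fun u hu => ?_)
      (.of_forall fun u _ => (hsum |c| u).summable) ?_ (.of_forall fun u _ => hsum c u)
    · have hu0 : 0 < u := (Set.uIoc_of_le hx ▸ hu).1
      simp only [norm_mul, norm_div, norm_pow, Real.norm_eq_abs, Real.abs_rpow_of_nonneg hu0.le,
        abs_of_pos hu0, abs_of_pos (Gamma_mul_natCast_add_pos hα hβ k), le_refl]
    · simp only [(hsum |c| _).tsum_eq]
      exact intervalIntegrable_rpow_mul hβ (continuous_mlScalar_rpow_mul hα hβ |c|) 0 x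
  simp only [integral_rpow_mul_pow_div_Gamma hα hβ hx] at hswap
  exact hswap.unique ((summable_pow_div_Gamma hα (by positivity) _).hasSum.mul_left _)

lemma rpow_one_sub_mul_rpow_sub_one_le {γ c t τ : ℝ} (hγ : γ ≤ 1) (ht : 0 ≤ t) (hτ : 0 < τ)
    (htτ : t ≤ c * τ) : t ^ (1 - γ) * τ ^ (γ - 1) ≤ c ^ (1 - γ) := by
  calc t ^ (1 - γ) * τ ^ (γ - 1) = (t / τ) ^ (1 - γ) := by
        rw [Real.div_rpow ht hτ.le, ← neg_sub 1 γ, Real.rpow_neg hτ.le, div_eq_mul_inv]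
    _ ≤ c ^ (1 - γ) :=
        Real.rpow_le_rpow (by positivity) ((div_le_iff₀ hτ).2 htτ) (by linarith)

lemma rpow_mul_integral_comp_sub_mul_rpow_le {K : ℝ → ℝ} {γ t₀ t : ℝ} (hγ : γ ≤ 1) (ht₀ : 0 < t₀)
    (ht : 2 * t₀ ≤ t) (hK : IntervalIntegrable K volume 0 t₀)
    (hK0 : ∀ u ∈ Set.Icc 0 t₀, 0 ≤ K u) :
    t ^ (1 - γ) * ∫ τ in (t - t₀)..t, K (t - τ) * τ ^ (γ - 1) ≤
      2 ^ (1 - γ) * ∫ u in 0..t₀, K u := by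
  have hKt : IntervalIntegrable (fun τ => K (t - τ)) volume (t - t₀) t := by
    simpa only [sub_zero] using (hK.comp_sub_left t).symm
  have hpos : ∀ τ ∈ Set.Icc (t - t₀) t, 0 < τ := fun τ hτ => by linarith [hτ.1]
  have hweight : ContinuousOn (fun τ : ℝ => τ ^ (γ - 1)) (Set.uIcc (t - t₀) t) := by
    rw [Set.uIcc_of_le (by linarith)]
    exact continuousOn_id.rpow_const fun τ hτ => Or.inl (hpos τ hτ).ne'
  have hsub : ∫ τ in (t - t₀)..t, K (t - τ) = ∫ u in 0..t₀, K u := by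
    rw [intervalIntegral.integral_comp_sub_left, sub_self, sub_sub_cancel]
  rw [← hsub, ← intervalIntegral.integral_const_mul, ← intervalIntegral.integral_const_mul]
  refine intervalIntegral.integral_mono_on (by linarith)
    ((hKt.mul_continuousOn hweight).const_mul _) (hKt.const_mul _) fun τ hτ => ?_
  rw [mul_left_comm, mul_comm]
  have hKτ : 0 ≤ K (t - τ) := hK0 _ ⟨by linarith [hτ.2], by linarith [hτ.1]⟩
  gcongr
  exact rpow_one_sub_mul_rpow_sub_one_le hγ (by linarith) (hpos τ hτ) (by linarith [hτ.1])

end Integral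

section Main

variable {𝔸 : Type*} [NormedRing 𝔸] [NormedAlgebra ℝ 𝔸] [CompleteSpace 𝔸] {α β : ℝ}

lemma intervalIntegrable_rpow_mul_norm_mittagLeffler (hα : 0 < α) (hβ : 0 < β) (A : 𝔸)
    (a b : ℝ) :
    IntervalIntegrable (fun u : ℝ => u ^ (β - 1) * ‖mittagLeffler α β (u ^ α • A)‖) volume a b :=
  intervalIntegrable_rpow_mul hβ ((continuous_mittagLeffler hα hβ).comp
    ((Real.continuous_rpow_const hα.le).smul continuous_const)).norm a b

lemma integral_rpow_mul_norm_mittagLeffler_le (hα : 0 < α) (hβ : 0 < β) (A : 𝔸) {x : ℝ}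
    (hx : 0 ≤ x) :
    ∫ u in 0..x, u ^ (β - 1) * ‖mittagLeffler α β (u ^ α • A)‖ ≤
      max ‖(1 : 𝔸)‖ 1 * (x ^ β * mlScalar α (β + 1) (x ^ α * ‖A‖)) := by
  rw [← integral_rpow_mul_mlScalar hα hβ hx, ← intervalIntegral.integral_const_mul]
  refine intervalIntegral.integral_mono_on hx
    (intervalIntegrable_rpow_mul_norm_mittagLeffler hα hβ A 0 x)
    ((intervalIntegrable_rpow_mul hβ
      (continuous_mlScalar_rpow_mul hα hβ ‖A‖) 0 x).const_mul _) fun u hu => ?_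
  have hu0 : 0 ≤ u := hu.1
  have hnorm : ‖u ^ α • A‖ = u ^ α * ‖A‖ := by
    rw [norm_smul, Real.norm_of_nonneg (by positivity)]
  rw [mul_left_comm, ← hnorm]
  gcongr
  exact norm_mittagLeffler_le hα hβ _

theorem stmt4_general {γ t₀ t : ℝ} (hα : 0 < α) (hβ : 0 < β) (hγ : γ ≤ 1) (A : 𝔸)
    (ht₀ : 0 < t₀) (ht : 2 * t₀ ≤ t) :
    t ^ (1 - γ) * ∫ τ in (t - t₀)..t,
        (t - τ) ^ (β - 1) * ‖mittagLeffler α β ((t - τ) ^ α • A)‖ * τ ^ (γ - 1) ≤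
      max ‖(1 : 𝔸)‖ 1 * (2 ^ (1 - γ) * t₀ ^ β * mlScalar α (β + 1) (t₀ ^ α * ‖A‖)) := by
  refine (rpow_mul_integral_comp_sub_mul_rpow_le hγ ht₀ ht
    (intervalIntegrable_rpow_mul_norm_mittagLeffler hα hβ A 0 t₀) fun u hu => ?_).trans ?_
  · have hu0 : 0 ≤ u := hu.1
    positivity
  · rw [mul_assoc (2 ^ (1 - γ)), mul_left_comm]
    gcongr
    exact integral_rpow_mul_norm_mittagLeffler_le hα hβ A ht₀.le

end Main

lemma linfty_opNorm_one_le {n : Type*} [Fintype n] [DecidableEq n] :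
    ‖(1 : Matrix n n ℝ)‖ ≤ 1 := by
  cases isEmpty_or_nonempty n
  · rw [Subsingleton.elim (1 : Matrix n n ℝ) 0, norm_zero]
    exact zero_le_one
  · exact norm_one.le

theorem stmt4 (α : ℝ) (hα0 : 0 < α) (hα1 : α < 1) (s : ℕ)
    (A : Matrix (Fin s) (Fin s) ℝ) (t₀ : ℝ) (ht₀ : 0 < t₀) :
    ∀ T > 2 * t₀, ∀ t > T,
      t ^ (1 - α) * ∫ τ in (t - t₀)..t,
        (t - τ) ^ (α - 1) * ‖ML α α ((t - τ) ^ α • A)‖ * τ ^ (α - 1)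
      ≤ 2 ^ (1 - α) * t₀ ^ α * mlScalar α (α + 1) (t₀ ^ α * ‖A‖) := by
  intro T hT t ht
  let _ : NormedAlgebra ℝ (Matrix (Fin s) (Fin s) ℝ) := Matrix.linftyOpNormedAlgebra
  have : CompleteSpace (Matrix (Fin s) (Fin s) ℝ) := FiniteDimensional.complete ℝ _
  have hbound := stmt4_general hα0 hα0 hα1.le A ht₀ (hT.trans ht).le
  rwa [max_eq_right linfty_opNorm_one_le, one_mul] at hbound
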